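/- Let α ∈ (0,1), let X = (X_1,…,X_n) be α-concentrated, and write S = X_1 + ⋯ + X_n. If β ↦ VaR_β(S) is left continuous at α and VaR_β(S) > VaR_α(S) for all β ∈ (0,α), then DQ^VaR_α(X) = 1. Similarly, if the X_i are integrable and ES_β(S) > ES_α(S) for all β ∈ (0,α), then DQ^ES_α(X) = 1. -/

import Mathlib

open MeasureTheory ProbabilityTheory Filter Set

namespace DQ

variable {Ω : Type*} [MeasurableSpace Ω]

/-- An atomless probability measure: every non-null measurable set has a measurable
subset of strictly smaller positive measure. -/
def Atomless (P : Measure Ω) : Prop :=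
  ∀ A : Set Ω, MeasurableSet A → 0 < P A →
    ∃ B, MeasurableSet B ∧ B ⊆ A ∧ 0 < P B ∧ P B < P A

/-- Value-at-Risk at level `α` (small-`α` convention):
`VaR_α(X) = inf {x | P(X ≤ x) ≥ 1 - α}`. -/
noncomputable def VaR (P : Measure Ω) (α : ℝ) (X : Ω → ℝ) : ℝ :=
  sInf {x : ℝ | 1 - α ≤ (P {ω | X ω ≤ x}).toReal}

/-- Expected Shortfall at level `α`: `ES_α(X) = (1/α) ∫_0^α VaR_β(X) dβ`. -/
noncomputable def ES (P : Measure Ω) (α : ℝ) (X : Ω → ℝ) : ℝ :=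
  (1 / α) * ∫ β in Set.Ioo (0 : ℝ) α, VaR P β X

/-- `α* = inf {β ∈ (0,1) | VaR_β(∑ Xᵢ) ≤ ∑ VaR_α(Xᵢ)}`, with `inf ∅ = 1`. -/
noncomputable def alphaStarVaR (P : Measure Ω) (α : ℝ) {n : ℕ} (X : Fin n → Ω → ℝ) : ℝ :=
  sInf ({β ∈ Set.Ioo (0 : ℝ) 1 |
    VaR P β (fun ω => ∑ i, X i ω) ≤ ∑ i, VaR P α (X i)} ∪ {1})

/-- Diversification quotient based on VaR: `DQ^VaR_α(X) = α*/α`. -/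
noncomputable def DQVaR (P : Measure Ω) (α : ℝ) {n : ℕ} (X : Fin n → Ω → ℝ) : ℝ :=
  alphaStarVaR P α X / α

/-- `α* = inf {β ∈ (0,1) | ES_β(∑ Xᵢ) ≤ ∑ ES_α(Xᵢ)}`, with `inf ∅ = 1`. -/
noncomputable def alphaStarES (P : Measure Ω) (α : ℝ) {n : ℕ} (X : Fin n → Ω → ℝ) : ℝ :=
  sInf ({β ∈ Set.Ioo (0 : ℝ) 1 |
    ES P β (fun ω => ∑ i, X i ω) ≤ ∑ i, ES P α (X i)} ∪ {1})

/-- Diversification quotient based on ES: `DQ^ES_α(X) = α*/α`. -/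
noncomputable def DQES (P : Measure Ω) (α : ℝ) {n : ℕ} (X : Fin n → Ω → ℝ) : ℝ :=
  alphaStarES P α X / α

end DQ

namespace DQ

variable {Ω : Type*} [MeasurableSpace Ω]

/-- `A` is a tail event of `X`: `0 < P(A) < 1` and, off a null set,
`X(ω) ≥ X(ω')` for all `ω ∈ A` and `ω' ∈ Aᶜ`. -/
def TailEvent (P : Measure Ω) (X : Ω → ℝ) (A : Set Ω) : Prop :=
  MeasurableSet A ∧ 0 < P A ∧ P A < 1 ∧
  ∃ N : Set Ω, P N = 0 ∧ ∀ ω ∈ A \ N, ∀ ω' ∈ Aᶜ \ N, X ω' ≤ X ω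

/-- `(X₁,…,Xₙ)` is `α`-concentrated: the components share a common tail event of
probability `α`. -/
def Concentrated (P : Measure Ω) {n : ℕ} (X : Fin n → Ω → ℝ) (α : ℝ) : Prop :=
  ∃ A : Set Ω, P A = ENNReal.ofReal α ∧ ∀ i, TailEvent P (X i) A

end DQ

namespace DQ
section helpers
variable {Ω : Type*} [MeasurableSpace Ω] (P : Measure Ω) [IsProbabilityMeasure P]

theorem cdf_eq' {X : Ω → ℝ} (hX : Measurable X) (x : ℝ) :
    cdf (P.map X) x = (P {ω | X ω ≤ x}).toReal := by
  haveI := Measure.isProbabilityMeasure_map (μ := P) hX.aemeasurable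
  rw [cdf_eq_real, Measure.real, Measure.map_apply hX measurableSet_Iic]
  rfl

theorem VaR_le_iff {X : Ω → ℝ} (hX : Measurable X) {β : ℝ} (hβ : β ∈ Ioo (0:ℝ) 1) (x : ℝ) :
    VaR P β X ≤ x ↔ 1 - β ≤ (P {ω | X ω ≤ x}).toReal := by
  haveI := Measure.isProbabilityMeasure_map (μ := P) hX.aemeasurable
  unfold VaR
  simp only [← cdf_eq' P hX]
  set F := cdf (P.map X) with hF
  have hne : {x : ℝ | 1 - β ≤ F x}.Nonempty := by
    have h := (tendsto_cdf_atTop (P.map X)).eventually (lt_mem_nhds (show 1 - β < 1 by linarith [hβ.1]))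
    obtain ⟨y, hy⟩ := h.exists
    exact ⟨y, le_of_lt hy⟩
  have hbd : BddBelow {x : ℝ | 1 - β ≤ F x} := by
    have h := (tendsto_cdf_atBot (P.map X)).eventually (gt_mem_nhds (show 0 < 1 - β by linarith [hβ.2]))
    obtain ⟨y, hy⟩ := h.exists
    refine ⟨y, fun z hz => ?_⟩
    by_contra hc
    push Not at hc
    have := F.mono hc.le
    simp only [mem_setOf_eq] at hz
    linarith
  constructor
  · intro h
    have h1 : ∀ y, x < y → 1 - β ≤ F y := by
      intro y hy
      obtain ⟨z, hz, hzy⟩ := exists_lt_of_csInf_lt hne (lt_of_le_of_lt h hy)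
      exact le_trans hz (F.mono hzy.le)
    have h2 : Tendsto F (nhdsWithin x (Ioi x)) (nhds (F x)) :=
      (F.right_continuous x).mono_left (nhdsWithin_mono _ Ioi_subset_Ici_self)
    refine ge_of_tendsto h2 ?_
    filter_upwards [self_mem_nhdsWithin] with y hy using h1 y hy
  · intro h
    exact csInf_le hbd h

theorem VaR_anti {X : Ω → ℝ} (hX : Measurable X) :
    AntitoneOn (fun β => VaR P β X) (Ioo (0:ℝ) 1) := by
  intro a ha b hb hab
  simp only
  rw [VaR_le_iff P hX hb]
  have := (VaR_le_iff P hX ha _).1 le_rfl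
  linarith

theorem VaR_aem {X : Ω → ℝ} (hX : Measurable X) :
    AEMeasurable (fun β => VaR P β X) (volume.restrict (Ioo (0:ℝ) 1)) :=
  aemeasurable_restrict_of_antitoneOn measurableSet_Ioo (VaR_anti P hX)

theorem VaR_law {X : Ω → ℝ} (hX : Measurable X) :
    (volume.restrict (Ioo (0:ℝ) 1)).map (fun β => VaR P β X) = P.map X := by
  haveI := Measure.isProbabilityMeasure_map (μ := P) hX.aemeasurable
  haveI : IsFiniteMeasure ((volume.restrict (Ioo (0:ℝ) 1)).map (fun β => VaR P β X)) :=
    Measure.isFiniteMeasure_map _ _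
  refine Measure.ext_of_Iic _ _ fun x => ?_
  rw [Measure.map_apply_of_aemeasurable (VaR_aem P hX) measurableSet_Iic,
    Measure.map_apply hX measurableSet_Iic, Measure.restrict_apply' measurableSet_Ioo]
  set p := (P {ω | X ω ≤ x}).toReal with hp
  have hp0 : 0 ≤ p := ENNReal.toReal_nonneg
  have hp1 : p ≤ 1 := measureReal_le_one
  have hpe : P (X ⁻¹' Iic x) = ENNReal.ofReal p := by
    rw [hp, ENNReal.ofReal_toReal (measure_ne_top _ _)]; rfl
  rw [hpe]
  apply le_antisymm
  · calc _ ≤ volume (Icc (1-p) 1) := by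
          apply measure_mono
          rintro β ⟨h1, h2⟩
          have := (VaR_le_iff P hX h2 x).1 h1
          exact ⟨by linarith, h2.2.le⟩
      _ = _ := by rw [Real.volume_Icc]; congr 1; ring
  · calc _ = volume (Ioo (1-p) 1) := by rw [Real.volume_Ioo]; congr 1; ring
      _ ≤ _ := by
          apply measure_mono
          rintro β ⟨h1, h2⟩
          have h3 : β ∈ Ioo (0:ℝ) 1 := ⟨by linarith, h2⟩
          refine ⟨(VaR_le_iff P hX h3 x).2 ?_, h3⟩
          linarith

theorem tail_compl {X : Ω → ℝ} (hX : Measurable X) {α : ℝ} (hα : α ∈ Ioo (0:ℝ) 1)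
    {A : Set Ω} (hA : P A = ENNReal.ofReal α) (hT : TailEvent P X A) :
    ∀ᵐ ω ∂P, ω ∉ A → X ω ≤ VaR P α X := by
  obtain ⟨hAm, -, -, N, hN, hT⟩ := hT
  set v := VaR P α X with hv
  have h1 : 1 - α ≤ P.real {ω | X ω ≤ v} := (VaR_le_iff P hX hα v).1 le_rfl
  have hAr : P.real A = α := by rw [Measure.real, hA, ENNReal.toReal_ofReal hα.1.le]
  have hAc : P.real Aᶜ = 1 - α := by rw [probReal_compl_eq_one_sub hAm, hAr]
  have hB : MeasurableSet {ω | X ω ≤ v} := measurableSet_le hX measurable_const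
  have hset : ∀ Q : Set Ω, P Q = 0 → Q = {ω | ¬ (ω ∉ A → X ω ≤ v)} → ∀ᵐ ω ∂P, ω ∉ A → X ω ≤ v := by
    rintro Q hQ rfl
    exact hQ
  refine hset (Aᶜ \ {ω | X ω ≤ v}) ?_ (by ext ω; simp)
  by_contra hne
  have hne2 : ¬ (Aᶜ \ {ω | X ω ≤ v} ⊆ N) := fun h => hne (measure_mono_null h hN)
  obtain ⟨ω', hω', hω'N⟩ := not_subset.1 hne2
  have hsub : P.real {ω | X ω ≤ v} ≤ P.real (Aᶜ ∩ {ω | X ω ≤ v}) := by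
    apply ENNReal.toReal_mono (measure_ne_top _ _)
    apply measure_mono_ae
    have : ∀ᵐ ω ∂P, ω ∉ N := measure_eq_zero_iff_ae_notMem.1 hN
    filter_upwards [this] with ω hω hωv
    refine ⟨fun hωA => ?_, hωv⟩
    have := hT ω ⟨hωA, hω⟩ ω' ⟨hω'.1, hω'N⟩
    exact hω'.2 (le_trans this hωv)
  have hadd := measureReal_inter_add_sdiff (μ := P) (s := Aᶜ) hB
  have : 0 < P.real (Aᶜ \ {ω | X ω ≤ v}) :=
    ENNReal.toReal_pos hne (measure_ne_top _ _)
  linarith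

theorem tail_self {X : Ω → ℝ} (hX : Measurable X) {α : ℝ} (hα : α ∈ Ioo (0:ℝ) 1)
    {A : Set Ω} (hA : P A = ENNReal.ofReal α) (hT : TailEvent P X A) :
    ∀ᵐ ω ∂P, ω ∈ A → VaR P α X ≤ X ω := by
  obtain ⟨hAm, -, -, N, hN, hT⟩ := hT
  have hAr : P.real A = α := by rw [Measure.real, hA, ENNReal.toReal_ofReal hα.1.le]
  have hAc : P.real Aᶜ = 1 - α := by rw [probReal_compl_eq_one_sub hAm, hAr]
  have hN' : ∀ᵐ ω ∂P, ω ∉ N := measure_eq_zero_iff_ae_notMem.1 hN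
  filter_upwards [hN'] with ω hω hωA
  rw [VaR_le_iff P hX hα, ← hAc]
  apply ENNReal.toReal_mono (measure_ne_top _ _)
  apply measure_mono_ae
  filter_upwards [hN'] with ω' hω' hA'
  exact hT ω ⟨hωA, hω⟩ ω' ⟨hA', hω'⟩

theorem int_VaR {X : Ω → ℝ} (hX : Measurable X) (hI : Integrable X P)
    {α : ℝ} (hα : α ∈ Ioo (0:ℝ) 1)
    {A : Set Ω} (hA : P A = ENNReal.ofReal α) (hT : TailEvent P X A) :
    ∫ β in Ioo (0:ℝ) α, VaR P β X = ∫ ω in A, X ω ∂P := by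
  have hAm := hT.1
  set v := VaR P α X with hv
  have hAr : P.real A = α := by rw [Measure.real, hA, ENNReal.toReal_ofReal hα.1.le]
  have hg : Measurable (fun x : ℝ => max (x - v) 0) := by fun_prop
  have hlaw := VaR_law P hX
  have e1 : ∫ β in Ioo (0:ℝ) 1, max (VaR P β X - v) 0 = ∫ ω, max (X ω - v) 0 ∂P := by
    rw [← integral_map (f := fun x => max (x - v) 0) (VaR_aem P hX) hg.aestronglyMeasurable, hlaw,
      integral_map (f := fun x => max (x - v) 0) hX.aemeasurable hg.aestronglyMeasurable]
  have hVI : IntegrableOn (fun β => VaR P β X) (Ioo (0:ℝ) 1) := by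
    have h1 : Integrable (fun x : ℝ => x) (P.map X) :=
      (integrable_map_measure measurable_id.aestronglyMeasurable hX.aemeasurable).2 hI
    rw [← hlaw] at h1
    exact (integrable_map_measure measurable_id.aestronglyMeasurable (VaR_aem P hX)).1 h1
  have hsub : Ioo (0:ℝ) α ⊆ Ioo 0 1 := Ioo_subset_Ioo_right hα.2.le
  have e2 : ∫ β in Ioo (0:ℝ) 1, max (VaR P β X - v) 0
      = ∫ β in Ioo (0:ℝ) α, (VaR P β X - v) := by
    have : ∫ β in Ioo (0:ℝ) 1, max (VaR P β X - v) 0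
      = ∫ β in Ioo (0:ℝ) α, max (VaR P β X - v) 0 := by
      apply setIntegral_eq_of_subset_of_forall_sdiff_eq_zero measurableSet_Ioo hsub
      rintro β ⟨hβ, hβ'⟩
      have h : α ≤ β := by
        by_contra hc
        exact hβ' ⟨hβ.1, not_le.1 hc⟩
      have := VaR_anti P hX hα hβ h
      simp only at this
      exact max_eq_right (by linarith)
    rw [this]
    apply setIntegral_congr_fun measurableSet_Ioo
    intro β hβ
    have := VaR_anti P hX (hsub hβ) hα hβ.2.le
    simp only at this ⊢
    exact max_eq_left (by linarith)
  have e3 : ∫ ω, max (X ω - v) 0 ∂P = ∫ ω in A, (X ω - v) ∂P := by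
    rw [← integral_indicator hAm]
    apply integral_congr_ae
    filter_upwards [tail_compl P hX hα hA hT, tail_self P hX hα hA hT] with ω h1 h2
    by_cases h : ω ∈ A
    · rw [indicator_of_mem h]
      exact max_eq_left (by linarith [h2 h])
    · rw [indicator_of_notMem h]
      exact max_eq_right (by linarith [h1 h])
  have e4 : ∫ β in Ioo (0:ℝ) α, (VaR P β X - v) = (∫ β in Ioo (0:ℝ) α, VaR P β X) - α * v := by
    rw [integral_sub (hVI.mono_set hsub) (integrable_const v), setIntegral_const]
    simp [Measure.real, hα.1.le]
  have e5 : ∫ ω in A, (X ω - v) ∂P = (∫ ω in A, X ω ∂P) - α * v := by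
    rw [integral_sub hI.integrableOn (integrable_const v), setIntegral_const, hAr, smul_eq_mul]
  linarith

theorem tail_sum {n : ℕ} [NeZero n] {X : Fin n → Ω → ℝ} {A : Set Ω} (hT : ∀ i, TailEvent P (X i) A) :
    TailEvent P (fun ω => ∑ i, X i ω) A := by
  choose h1 h2 h3 N hN h using hT
  refine ⟨h1 0, h2 0, h3 0, ⋃ i, N i, measure_iUnion_null hN, ?_⟩
  rintro ω ⟨hω, hωN⟩ ω' ⟨hω', hωN'⟩
  simp only [mem_iUnion, not_exists] at hωN hωN'
  exact Finset.sum_le_sum fun i _ => h i ω ⟨hω, hωN i⟩ ω' ⟨hω', hωN' i⟩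

theorem sInf_eq {α : ℝ} (hα : α ∈ Ioo (0:ℝ) 1) {p : ℝ → Prop} (h1 : p α)
    (h2 : ∀ β ∈ Ioo (0:ℝ) α, ¬ p β) : sInf ({β ∈ Ioo (0:ℝ) 1 | p β} ∪ {1}) = α := by
  apply IsLeast.csInf_eq
  refine ⟨Or.inl ⟨hα, h1⟩, ?_⟩
  rintro β (⟨hβ, hp⟩ | rfl)
  · by_contra hc
    exact h2 β ⟨hβ.1, not_le.1 hc⟩ hp
  · exact hα.2.le

theorem VaR_zero {β : ℝ} (hβ : β ∈ Ioo (0:ℝ) 1) : VaR P β (fun _ : Ω => (0:ℝ)) = 0 := by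
  apply eq_of_forall_ge_iff
  intro c
  rw [VaR_le_iff P measurable_const hβ]
  by_cases h : 0 ≤ c
  · simp [h, hβ.1.le]
  · simp [h, hβ.2]

end helpers
end DQ

open DQ in
/-- Let X be α-concentrated and S = X₁ + ⋯ + Xₙ.  If β ↦ VaR_β(S) is left continuous
at α and VaR_β(S) > VaR_α(S) for all β ∈ (0,α), then DQ^VaR_α(X) = 1.  Similarly, if
the Xᵢ are integrable and ES_β(S) > ES_α(S) for all β ∈ (0,α), then DQ^ES_α(X) = 1. -/
theorem stmt7 {Ω : Type*} [MeasurableSpace Ω] (P : Measure Ω) [IsProbabilityMeasure P]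
    (hP : Atomless P) (n : ℕ) (X : Fin n → Ω → ℝ) (hX : ∀ i, Measurable (X i))
    (α : ℝ) (hα : α ∈ Set.Ioo (0 : ℝ) 1) (hconc : Concentrated P X α) :
    ((ContinuousWithinAt (fun β => VaR P β (fun ω => ∑ i, X i ω)) (Set.Iic α) α ∧
        (∀ β ∈ Set.Ioo (0 : ℝ) α,
          VaR P α (fun ω => ∑ i, X i ω) < VaR P β (fun ω => ∑ i, X i ω))) →
      DQVaR P α X = 1) ∧
    (((∀ i, Integrable (X i) P) ∧
        (∀ β ∈ Set.Ioo (0 : ℝ) α,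
          ES P α (fun ω => ∑ i, X i ω) < ES P β (fun ω => ∑ i, X i ω))) →
      DQES P α X = 1) := by
  have hαne : α ≠ 0 := hα.1.ne'
  set S : Ω → ℝ := fun ω => ∑ i, X i ω with hS
  have hSm : Measurable S := Finset.measurable_sum _ fun i _ => hX i
  have hhalf : α / 2 ∈ Set.Ioo (0:ℝ) α := ⟨by linarith [hα.1], by linarith [hα.1]⟩
  have hlt1 : ∀ β ∈ Set.Ioo (0:ℝ) α, β ∈ Set.Ioo (0:ℝ) 1 := fun β hβ => ⟨hβ.1, hβ.2.trans hα.2⟩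
  rcases Nat.eq_zero_or_pos n with hn | hn
  · subst hn
    have hS0 : S = fun _ => 0 := by simp [hS]
    constructor
    · rintro ⟨-, h⟩
      have := h _ hhalf
      rw [hS0, VaR_zero P hα, VaR_zero P (hlt1 _ hhalf)] at this
      exact absurd this (lt_irrefl _)
    · rintro ⟨-, h⟩
      have := h _ hhalf
      have hz : ∀ γ, γ ≤ α → ES P γ S = 0 := by
        intro γ hγ
        unfold ES
        rw [setIntegral_congr_fun (g := fun _ => (0:ℝ)) measurableSet_Ioo]
        · simp
        · intro β hβ
          simp only [hS0]
          exact VaR_zero P (hlt1 β ⟨hβ.1, hβ.2.trans_le hγ⟩)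
      rw [hz α le_rfl, hz _ hhalf.2.le] at this
      exact absurd this (lt_irrefl _)
  haveI : NeZero n := ⟨hn.ne'⟩
  obtain ⟨A, hA, hT⟩ := hconc
  have hTS : TailEvent P S A := tail_sum P hT
  have hAm := hTS.1
  have hAr : P.real A = α := by rw [Measure.real, hA, ENNReal.toReal_ofReal hα.1.le]
  have hAc : P.real Aᶜ = 1 - α := by rw [probReal_compl_eq_one_sub hAm, hAr]
  constructor
  · rintro ⟨hc, hs⟩
    set c := ∑ i, VaR P α (X i) with hcdef
    have hup : VaR P α S ≤ c := by
      rw [VaR_le_iff P hSm hα, ← hAc]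
      apply ENNReal.toReal_mono (measure_ne_top _ _)
      apply measure_mono_ae
      have := ae_all_iff.2 fun i => tail_compl P (hX i) hα hA (hT i)
      filter_upwards [this] with ω h hω
      exact Finset.sum_le_sum fun i _ => h i hω
    have hlow : ∀ β ∈ Set.Ioo (0:ℝ) α, c ≤ VaR P β S := by
      intro β hβ
      by_contra hcon
      push Not at hcon
      have h1 := (VaR_le_iff P hSm (hlt1 β hβ) _).1 le_rfl
      have h2 : P.real {ω | S ω ≤ VaR P β S} ≤ P.real Aᶜ := by
        apply ENNReal.toReal_mono (measure_ne_top _ _)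
        apply measure_mono_ae
        have := ae_all_iff.2 fun i => tail_self P (hX i) hα hA (hT i)
        filter_upwards [this] with ω h hω hωA
        have h3 : c ≤ S ω := Finset.sum_le_sum fun i _ => h i hωA
        have h4 : S ω ≤ VaR P β S := hω
        linarith
      rw [hAc] at h2
      have h5 : 1 - β ≤ 1 - α := h1.trans h2
      linarith [hβ.2]
    have hlim : c ≤ VaR P α S := by
      have h2 : Tendsto (fun β => VaR P β S) (nhdsWithin α (Set.Iio α)) (nhds (VaR P α S)) :=
        hc.mono_left (nhdsWithin_mono _ Set.Iio_subset_Iic_self)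
      refine ge_of_tendsto h2 ?_
      filter_upwards [Ioo_mem_nhdsLT hα.1] with β hβ using hlow β hβ
    have : alphaStarVaR P α X = α :=
      sInf_eq hα hup fun β hβ h => absurd (hs β hβ) (not_lt.2 (h.trans hlim))
    rw [DQVaR, this, div_self hαne]
  · rintro ⟨hI, hs⟩
    have hSI : Integrable S P := integrable_finsetSum _ fun i _ => hI i
    have heq : ES P α S = ∑ i, ES P α (X i) := by
      unfold ES
      rw [← Finset.mul_sum, int_VaR P hSm hSI hα hA hTS,
        Finset.sum_congr rfl fun i _ => int_VaR P (hX i) (hI i) hα hA (hT i)]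
      rw [integral_finsetSum _ fun i _ => (hI i).integrableOn]
    have : alphaStarES P α X = α :=
      sInf_eq hα heq.le fun β hβ h => absurd (hs β hβ) (not_lt.2 (h.trans heq.ge))
    rw [DQES, this, div_self hαne]
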